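/- arXiv:cs/0605071 — 2 statements merged into one kernel-verified Lean document; each statement's English description precedes it below -/
import Mathlib

section
/- Let U be a random element, let X₁, X₂ be zero-mean real random variables with E[X₁²] ≤ P₁ and E[X₂²] ≤ P₂, let Z₁ ~ N(0,1) be independent of (U,X₁,X₂), and suppose all differential entropies involved are well defined and finite. If α ∈ [0,1] satisfies h(X₁ + Z₁ | U, X₂) = ½ log(2πe(1 + αP₁)), then E[X₁X₂] ≤ √((1−α)P₁P₂). -/
open MeasureTheory ProbabilityTheory

noncomputable section

/-- Differential entropy (base 2) of a measure on `ℝ`, computed from its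
Radon–Nikodym density with respect to Lebesgue measure:
`h(ν) = -∫ f log₂ f` where `f = dν/dx`. -/
def dH1 (ν : Measure ℝ) : ℝ :=
  -∫ x, (ν.rnDeriv volume x).toReal * Real.logb 2 (ν.rnDeriv volume x).toReal

/-- Conditional differential entropy (base 2) `h(Y | X)`: the expectation over `X`
of the differential entropy of the conditional law of `Y` given `X`. -/
def condDiffEnt {Ω β : Type*} [MeasurableSpace Ω] [MeasurableSpace β]
    (μ : Measure Ω) [IsFiniteMeasure μ] (Y : Ω → ℝ) (X : Ω → β) : ℝ :=
  ∫ ω, dH1 (condDistrib Y X μ (X ω)) ∂μ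

lemma dH1_le_aux (ν : Measure ℝ) [IsProbabilityMeasure ν] (hac : ν ≪ volume) (m s : ℝ)
    (hs : 1 ≤ s) (hint : Integrable (fun y => (y - m) ^ 2) ν) :
    dH1 ν ≤ (1 / 2 * Real.log (2 * Real.pi * s) + (∫ y, (y - m) ^ 2 ∂ν) / (2 * s)) / Real.log 2 := by
  have hs0 : 0 < s := by linarith
  have hL : 0 < Real.log 2 := Real.log_pos (by norm_num)
  have hpi := Real.pi_gt_three
  have hlog : 0 ≤ Real.log (2 * Real.pi * s) := Real.log_nonneg (by nlinarith)
  have hV : 0 ≤ ∫ y, (y - m) ^ 2 ∂ν := integral_nonneg fun y => sq_nonneg _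
  set f : ℝ → ℝ := fun x => (ν.rnDeriv volume x).toReal with hf
  have hdH : dH1 ν = (-∫ x, f x * Real.log (f x)) / Real.log 2 := by
    unfold dH1
    simp only [Real.logb, ← mul_div_assoc, integral_div, neg_div, hf]
  rw [hdH]
  refine div_le_div_of_nonneg_right ?_ hL.le
  by_cases hfl : Integrable (fun x => f x * Real.log (f x))
  swap
  · rw [integral_undef hfl, neg_zero]; positivity
  set q : ℝ → ℝ := fun y => 1 / 2 * Real.log (2 * Real.pi * s) + (y - m) ^ 2 / (2 * s) with hq
  have hqint : Integrable q ν := (integrable_const _).add (hint.div_const _)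
  have hqI : ∫ y, q y ∂ν = 1 / 2 * Real.log (2 * Real.pi * s) + (∫ y, (y - m) ^ 2 ∂ν) / (2 * s) := by
    rw [hq, integral_add (integrable_const _) (hint.div_const _), integral_div]
    simp
  have hg : (fun y => Real.exp (- q y)) = gaussianPDFReal m ⟨s, hs0.le⟩ := by
    funext y
    simp only [hq, gaussianPDFReal]
    rw [neg_add, Real.exp_add, neg_div]
    congr 1
    rw [Real.exp_neg, Real.sqrt_eq_rpow, Real.rpow_def_of_pos (by positivity)]
    congr 2
    show _ = Real.log (2 * Real.pi * s) * (1 / 2)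
    ring
  have hv : (⟨s, hs0.le⟩ : NNReal) ≠ 0 := by
    intro h; exact hs0.ne' (congrArg NNReal.toReal h)
  have hgint : Integrable (fun y => Real.exp (- q y)) := by
    rw [hg]; exact integrable_gaussianPDFReal _ _
  have hgI : ∫ y, Real.exp (- q y) = 1 := by
    rw [hg]; exact integral_gaussianPDFReal_eq_one _ hv
  have hfq : Integrable (fun x => f x * q x) :=
    (integrable_toReal_rnDeriv_mul_iff hac).2 hqint
  have hfqI : ∫ x, f x * q x = ∫ y, q y ∂ν := integral_toReal_rnDeriv_mul hac
  have hfint : Integrable f := Measure.integrable_toReal_rnDeriv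
  have hfI : ∫ x, f x = 1 := by
    rw [hf, Measure.integral_toReal_rnDeriv hac]; simp
  have key : ∫ x, -(f x * Real.log (f x)) ≤ ∫ x, (f x * q x + Real.exp (- q x) - f x) := by
    refine integral_mono hfl.neg ((hfq.add hgint).sub hfint) fun x => ?_
    have hf0 : 0 ≤ f x := ENNReal.toReal_nonneg
    rcases hf0.eq_or_lt with h | h
    · simp only [← h]; simp [Real.exp_nonneg]
    · have h1 := Real.log_le_sub_one_of_pos (div_pos (Real.exp_pos (- q x)) h)
      rw [Real.log_div (Real.exp_pos _).ne' h.ne', Real.log_exp] at h1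
      have h2 := mul_le_mul_of_nonneg_left h1 h.le
      have h3 : f x * (Real.exp (- q x) / f x - 1) = Real.exp (- q x) - f x := by
        field_simp
      rw [h3] at h2
      show -(f x * Real.log (f x)) ≤ f x * q x + Real.exp (- q x) - f x
      linarith
  rw [integral_neg, integral_sub (f := fun x => f x * q x + Real.exp (- q x)) (hfq.add hgint) hfint,
    integral_add hfq hgint, hfqI, hgI, hfI, hqI] at key
  linarith

lemma condDistrib_ac_aux {Ω β : Type*} [MeasurableSpace Ω] [MeasurableSpace β]
    (μ : Measure Ω) [IsProbabilityMeasure μ] (W : Ω → β) (X Z : Ω → ℝ)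
    (hW : Measurable W) (hX : Measurable X) (hZ : Measurable Z)
    (hZlaw : Measure.map Z μ = gaussianReal 0 1)
    (hindep : IndepFun Z (fun ω => (W ω, X ω)) μ) :
    ∀ᵐ ω ∂μ, condDistrib (fun ω => X ω + Z ω) W μ (W ω) ≪ volume := by
  have : IsProbabilityMeasure (μ.map W) := Measure.isProbabilityMeasure_map hW.aemeasurable
  have hWX : Measurable (fun ω => (W ω, X ω)) := hW.prodMk hX
  have : IsProbabilityMeasure (μ.map (fun ω => (W ω, X ω))) :=
    Measure.isProbabilityMeasure_map hWX.aemeasurable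
  have hY : Measurable (fun ω => X ω + Z ω) := hX.add hZ
  have h1 : (μ.map W) ⊗ₘ condDistrib (fun ω => X ω + Z ω) W μ
      ≪ (μ.map W) ⊗ₘ (Kernel.const β (gaussianReal 0 1)) := by
    rw [compProd_map_condDistrib hY.aemeasurable, Measure.compProd_const]
    refine Measure.AbsolutelyContinuous.mk fun S hS h0 => ?_
    have hjoint := (indepFun_iff_map_prod_eq_prod_map_map hZ.aemeasurable hWX.aemeasurable).1
      hindep
    rw [Measure.measure_prod_null hS] at h0
    have h0' : ∀ᵐ ω ∂μ, gaussianReal 0 1 (Prod.mk (W ω) ⁻¹' S) = 0 :=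
      ae_of_ae_map hW.aemeasurable h0
    rw [Measure.map_apply (hW.prodMk hY) hS]
    let φ : ℝ × (β × ℝ) → β × ℝ := fun p => (p.2.1, p.2.2 + p.1)
    have hφ : Measurable φ := by fun_prop
    have e : (fun ω => (W ω, X ω + Z ω)) ⁻¹' S
        = (fun ω => (Z ω, (W ω, X ω))) ⁻¹' (φ ⁻¹' S) := rfl
    rw [e, ← Measure.map_apply (hZ.prodMk hWX) (hφ hS), hjoint, hZlaw,
      Measure.prod_apply_symm (hφ hS), lintegral_eq_zero_iff (measurable_measure_prodMk_right (hφ hS))]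
    refine (ae_map_iff hWX.aemeasurable
      (measurableSet_eq_fun (measurable_measure_prodMk_right (hφ hS)) measurable_const)).2 ?_
    filter_upwards [h0'] with ω hω
    have hv : volume (Prod.mk (W ω) ⁻¹' S) = 0 :=
      gaussianReal_absolutelyContinuous' 0 one_ne_zero hω
    have hv2 : volume ((fun z => X ω + z) ⁻¹' (Prod.mk (W ω) ⁻¹' S)) = 0 := by
      rw [measure_preimage_add]; exact hv
    exact gaussianReal_absolutelyContinuous 0 one_ne_zero hv2
  have h2 := Measure.AbsolutelyContinuous.kernel_of_compProd h1
  filter_upwards [ae_of_ae_map hW.aemeasurable h2] with ω hω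
  exact hω.trans (by simpa using gaussianReal_absolutelyContinuous 0 one_ne_zero)

/-- **Lemma (covariance bound from the conditional-entropy constraint).**
If `X₁, X₂` are zero-mean with `E[X₁²] ≤ P₁`, `E[X₂²] ≤ P₂`, `Z₁ ~ N(0,1)` is
independent of `(U, X₁, X₂)`, and `h(X₁ + Z₁ | U, X₂) = ½ log(2πe(1 + αP₁))` for
some `α ∈ [0,1]`, then `E[X₁X₂] ≤ √((1−α)P₁P₂)`. -/
theorem cov_le_of_condEntropy {Ω 𝒰 : Type*} [MeasurableSpace Ω] [MeasurableSpace 𝒰]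
    (μ : Measure Ω) [IsProbabilityMeasure μ]
    (U : Ω → 𝒰) (X1 X2 Z1 : Ω → ℝ)
    (hU : Measurable U) (hX1 : Measurable X1) (hX2 : Measurable X2) (hZ1 : Measurable Z1)
    (P1 P2 : ℝ) (hP1 : 0 < P1) (hP2 : 0 < P2)
    (hX1sq : MemLp X1 2 μ) (hX2sq : MemLp X2 2 μ)
    (hX1mean : (∫ ω, X1 ω ∂μ) = 0) (hX2mean : (∫ ω, X2 ω ∂μ) = 0)
    (hX1pow : (∫ ω, (X1 ω) ^ 2 ∂μ) ≤ P1) (hX2pow : (∫ ω, (X2 ω) ^ 2 ∂μ) ≤ P2)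
    (hZ1law : Measure.map Z1 μ = gaussianReal 0 1)
    (hindep : IndepFun Z1 (fun ω => (U ω, X1 ω, X2 ω)) μ)
    (α : ℝ) (hα0 : 0 ≤ α) (hα1 : α ≤ 1)
    (hent : condDiffEnt μ (fun ω => X1 ω + Z1 ω) (fun ω => (U ω, X2 ω))
      = (1 / 2) * Real.logb 2 (2 * Real.pi * Real.exp 1 * (1 + α * P1))) :
    (∫ ω, X1 ω * X2 ω ∂μ) ≤ Real.sqrt ((1 - α) * P1 * P2) := by
  set ρ := ∫ ω, X1 ω * X2 ω ∂μ with hρ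
  set c := ρ / P2 with hc
  set t := 1 + α * P1 with ht
  have ht1 : 1 ≤ t := by have := mul_nonneg hα0 hP1.le; linarith
  have hL : 0 < Real.log 2 := Real.log_pos (by norm_num)
  set W : Ω → 𝒰 × ℝ := fun ω => (U ω, X2 ω) with hWdef
  set Y : Ω → ℝ := fun ω => X1 ω + Z1 ω with hYdef
  have hW : Measurable W := hU.prodMk hX2
  have hY : Measurable Y := hX1.add hZ1
  have hind1 : IndepFun Z1 (fun ω => (W ω, X1 ω)) μ :=
    hindep.comp (φ := id) (ψ := fun p : 𝒰 × ℝ × ℝ => ((p.1, p.2.2), p.2.1)) measurable_id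
      (by fun_prop)
  have hind2 : IndepFun Z1 (fun ω => X1 ω - c * X2 ω) μ :=
    hindep.comp (φ := id) (ψ := fun p : 𝒰 × ℝ × ℝ => p.2.1 - c * p.2.2) measurable_id
      (by fun_prop)
  have hac := condDistrib_ac_aux μ W X1 Z1 hW hX1 hZ1 hZ1law hind1
  -- moments of the noise
  have hZ2 : MemLp Z1 2 μ := by
    have h := memLp_id_gaussianReal' (μ := 0) (v := 1) 2 (by simp)
    rw [← hZ1law] at h
    exact h.comp_of_map hZ1.aemeasurable
  have hZm : ∫ ω, Z1 ω ∂μ = 0 := by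
    have h := integral_id_gaussianReal (μ := 0) (v := 1)
    rw [← hZ1law, integral_map hZ1.aemeasurable (by fun_prop)] at h
    exact h
  have hZv : ∫ ω, Z1 ω ^ 2 ∂μ = 1 := by
    have h := variance_fun_id_gaussianReal (μ := 0) (v := 1)
    rw [← hZ1law, variance_map (by fun_prop) hZ1.aemeasurable] at h
    rw [variance_of_integral_eq_zero (by fun_prop) (by simpa using hZm)] at h
    simpa using h
  have hD : MemLp (fun ω => X1 ω - c * X2 ω) 2 μ := hX1sq.sub (hX2sq.const_mul c)
  have hE : MemLp (fun ω => X1 ω + Z1 ω - c * X2 ω) 2 μ := (hX1sq.add hZ2).sub (hX2sq.const_mul c)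
  have hVar : ∫ ω, (X1 ω + Z1 ω - c * X2 ω) ^ 2 ∂μ
      = (∫ ω, X1 ω ^ 2 ∂μ) - 2 * c * ρ + c ^ 2 * (∫ ω, X2 ω ^ 2 ∂μ) + 1 := by
    have i1 : Integrable (fun ω => X1 ω ^ 2) μ := hX1sq.integrable_sq
    have i2 : Integrable (fun ω => X2 ω ^ 2) μ := hX2sq.integrable_sq
    have i3 : Integrable (fun ω => X1 ω * X2 ω) μ := hX1sq.integrable_mul hX2sq
    have i4 : Integrable (fun ω => Z1 ω ^ 2) μ := hZ2.integrable_sq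
    have i5 : Integrable (fun ω => Z1 ω * (X1 ω - c * X2 ω)) μ := hZ2.integrable_mul hD
    have e5 : ∫ ω, Z1 ω * (X1 ω - c * X2 ω) ∂μ = 0 := by
      rw [hind2.integral_fun_mul_eq_mul_integral hZ2.1 hD.1, hZm, zero_mul]
    have e : ∀ ω, (X1 ω + Z1 ω - c * X2 ω) ^ 2 = X1 ω ^ 2 - 2 * c * (X1 ω * X2 ω)
        + c ^ 2 * X2 ω ^ 2 + Z1 ω ^ 2 + 2 * (Z1 ω * (X1 ω - c * X2 ω)) := fun ω => by ring
    have j1 : Integrable (fun ω => X1 ω ^ 2 - 2 * c * (X1 ω * X2 ω)) μ := i1.sub (i3.const_mul (2 * c))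
    have j2 : Integrable (fun ω => X1 ω ^ 2 - 2 * c * (X1 ω * X2 ω) + c ^ 2 * X2 ω ^ 2) μ := j1.add (i2.const_mul (c ^ 2))
    have j3 : Integrable (fun ω => X1 ω ^ 2 - 2 * c * (X1 ω * X2 ω) + c ^ 2 * X2 ω ^ 2
        + Z1 ω ^ 2) μ := j2.add i4
    simp_rw [e]
    rw [integral_add j3 (i5.const_mul 2), integral_add j2 i4,
      integral_add j1 (i2.const_mul (c ^ 2)), integral_sub i1 (i3.const_mul (2 * c)),
      integral_const_mul, integral_const_mul, integral_const_mul, e5, hZv]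
    ring
  -- conditional second moments
  let F : (𝒰 × ℝ) × ℝ → ℝ := fun p => (p.2 - c * p.1.2) ^ 2
  have hF : Measurable F := by fun_prop
  have hWY : Measurable (fun ω => (W ω, Y ω)) := hW.prodMk hY
  have hFint : Integrable F (μ.map fun ω => (W ω, Y ω)) := by
    rw [integrable_map_measure hF.aestronglyMeasurable hWY.aemeasurable]
    exact hE.integrable_sq
  have hae := hFint.condDistrib_ae hW.aemeasurable hY.aemeasurable
  have hFi := hFint.integral_condDistrib hW.aemeasurable hY.aemeasurable
  have hFI : ∫ ω, ∫ y, F (W ω, y) ∂(condDistrib Y W μ (W ω)) ∂μ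
      = ∫ ω, (X1 ω + Z1 ω - c * X2 ω) ^ 2 ∂μ := by
    have hp : IsProbabilityMeasure (μ.map W) := Measure.isProbabilityMeasure_map hW.aemeasurable
    have h := hFint
    rw [← compProd_map_condDistrib hY.aemeasurable] at h
    have h' := Measure.integral_compProd h
    rw [compProd_map_condDistrib hY.aemeasurable, integral_map hWY.aemeasurable
      hF.aestronglyMeasurable, integral_map hW.aemeasurable
      (hFint.integral_condDistrib_map hY.aemeasurable).1] at h'
    exact h'.symm
  have hlog : 0 < Real.log (2 * Real.pi * t) := by
    have := Real.pi_gt_three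
    exact Real.log_pos (by nlinarith)
  have hrhs : Real.logb 2 (2 * Real.pi * Real.exp 1 * t)
      = (Real.log (2 * Real.pi * t) + 1) / Real.log 2 := by
    have := Real.pi_pos
    rw [Real.logb, show 2 * Real.pi * Real.exp 1 * t = (2 * Real.pi * t) * Real.exp 1 by ring,
      Real.log_mul (by positivity) (Real.exp_pos _).ne', Real.log_exp]
  rw [hrhs] at hent
  unfold condDiffEnt at hent
  have hdint : Integrable (fun ω => dH1 (condDistrib Y W μ (W ω))) μ := by
    by_contra h
    rw [integral_undef h] at hent
    have : 0 < (Real.log (2 * Real.pi * t) + 1) / Real.log 2 := by positivity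
    linarith
  have hmono : ∫ ω, dH1 (condDistrib Y W μ (W ω)) ∂μ
      ≤ ∫ ω, (1 / 2 * Real.log (2 * Real.pi * t)
        + (∫ y, F (W ω, y) ∂(condDistrib Y W μ (W ω))) / (2 * t)) / Real.log 2 ∂μ := by
    refine integral_mono_ae hdint
      (((integrable_const _).add (hFi.div_const _)).div_const _) ?_
    filter_upwards [hac, hae] with ω h1 h2
    exact dH1_le_aux _ h1 (c * X2 ω) t ht1 h2
  rw [hent, integral_div, integral_add (integrable_const _) (hFi.div_const _), integral_div,
    hFI, hVar, ← mul_div_assoc, div_le_div_iff_of_pos_right hL] at hmono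
  simp only [integral_const, probReal_univ, smul_eq_mul, one_mul] at hmono
  have ht0 : 0 < t := by linarith
  have h3 : t ≤ (∫ ω, X1 ω ^ 2 ∂μ) - 2 * c * ρ + c ^ 2 * (∫ ω, X2 ω ^ 2 ∂μ) + 1 := by
    have h4 : 1 / 2 ≤ ((∫ ω, X1 ω ^ 2 ∂μ) - 2 * c * ρ + c ^ 2 * (∫ ω, X2 ω ^ 2 ∂μ) + 1) / (2 * t) := by
      linarith
    rw [le_div_iff₀ (by positivity)] at h4
    linarith
  have h5 : c ^ 2 * (∫ ω, X2 ω ^ 2 ∂μ) ≤ c ^ 2 * P2 :=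
    mul_le_mul_of_nonneg_left hX2pow (sq_nonneg _)
  have hρc : ρ = c * P2 := by rw [hc]; field_simp
  refine Real.le_sqrt_of_sq_le ?_
  have h6 : c ^ 2 * P2 ≤ (1 - α) * P1 := by
    have : 2 * c * ρ = 2 * (c ^ 2 * P2) := by rw [hρc]; ring
    linarith
  calc ρ ^ 2 = (c ^ 2 * P2) * P2 := by rw [hρc]; ring
    _ ≤ (1 - α) * P1 * P2 := mul_le_mul_of_nonneg_right h6 hP2.le
end
end

section
/- Let |b| ≤ 1, let U be a random element, let X₁, X₂ be zero-mean real random variables with E[X₁²] ≤ P₁ and E[X₂²] ≤ P₂, let Z₁ ~ N(0,1) and Z' ~ N(0,1−b²) be independent of each other and of (U,X₁,X₂), and set Y₂ = bX₁ + X₂ + bZ₁ + Z' (so that the additive noise bZ₁ + Z' is standard Gaussian); assume all differential entropies involved are well defined and finite. If α ∈ [0,1] satisfies h(X₁ + Z₁ | U, X₂) = ½ log(2πe(1 + αP₁)), then I(U, X₂ ; Y₂) ≤ ½ log( (1 + b²P₁ + P₂ + 2|b|√((1−α)P₁P₂)) / (1 + b²αP₁) ). -/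
open MeasureTheory ProbabilityTheory

noncomputable section

/-! ### Gaussian smoothing -/

/-- standard Gaussian density -/
def gphi (x : ℝ) : ℝ := gaussianPDFReal 0 1 x

/-- density of `ν * N(0,1)` -/
def pd (ν : Measure ℝ) (x : ℝ) : ℝ := ∫ v, gphi (x - v) ∂ν

/-- `ν * N(0,1)` -/
def sm (ν : Measure ℝ) : Measure ℝ := (ν.prod (gaussianReal 0 1)).map (fun p => p.1 + p.2)

/-- natural log entropy of `ν * N(0,1)` -/
def Hn (ν : Measure ℝ) : ℝ := -∫ y, Real.log (pd ν y) ∂(sm ν)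

lemma gphi_eq (x : ℝ) : gphi x = (Real.sqrt (2 * Real.pi))⁻¹ * Real.exp (-x ^ 2 / 2) := by
  simp [gphi, gaussianPDFReal]

lemma gphi_pos (x : ℝ) : 0 < gphi x := gaussianPDFReal_pos 0 1 x (by simp)

lemma gphi_le_one (x : ℝ) : gphi x ≤ 1 := by
  rw [gphi_eq]
  have h1 : 1 ≤ Real.sqrt (2 * Real.pi) := by
    rw [Real.one_le_sqrt]; nlinarith [Real.pi_gt_three]
  have h2 : Real.exp (-x ^ 2 / 2) ≤ 1 := by
    rw [Real.exp_le_one_iff]; nlinarith [sq_nonneg x]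
  have h3 : (Real.sqrt (2 * Real.pi))⁻¹ ≤ 1 := inv_le_one_of_one_le₀ h1
  calc _ ≤ (1:ℝ) * 1 := mul_le_mul h3 h2 (Real.exp_pos _).le zero_le_one
    _ = 1 := by ring

lemma log_gphi (x : ℝ) : Real.log (gphi x) = -(1 / 2) * Real.log (2 * Real.pi) - x ^ 2 / 2 := by
  have : 0 < Real.sqrt (2 * Real.pi) := by positivity
  rw [gphi_eq, Real.log_mul (by positivity) (Real.exp_pos _).ne', Real.log_exp, Real.log_inv,
    Real.log_sqrt (by positivity)]
  ring

@[fun_prop]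
lemma gphi_continuous : Continuous gphi := by
  have : gphi = fun x => (Real.sqrt (2 * Real.pi))⁻¹ * Real.exp (-x ^ 2 / 2) := funext gphi_eq
  rw [this]; fun_prop

@[fun_prop]
lemma gphi_measurable : Measurable gphi := gphi_continuous.measurable

lemma gphi_integrable (ν : Measure ℝ) [IsProbabilityMeasure ν] (x : ℝ) :
    Integrable (fun v => gphi (x - v)) ν := by
  refine Integrable.of_bound (C := 1) (by fun_prop) (ae_of_all _ fun v => ?_)
  rw [Real.norm_of_nonneg (gphi_pos _).le]; exact gphi_le_one _

lemma pd_pos (ν : Measure ℝ) [IsProbabilityMeasure ν] (x : ℝ) : 0 < pd ν x := by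
  unfold pd
  rw [integral_pos_iff_support_of_nonneg (fun v => (gphi_pos _).le) (gphi_integrable ν x)]
  have : Function.support (fun v => gphi (x - v)) = Set.univ := by
    ext v; simp [(gphi_pos (x - v)).ne']
  rw [this]; simp

lemma pd_le_one (ν : Measure ℝ) [IsProbabilityMeasure ν] (x : ℝ) : pd ν x ≤ 1 := by
  unfold pd
  calc _ ≤ ∫ v, (1:ℝ) ∂ν := integral_mono (gphi_integrable ν x) (integrable_const _)
        (fun v => gphi_le_one _)
    _ = 1 := by simp

lemma pd_continuous (ν : Measure ℝ) [IsProbabilityMeasure ν] : Continuous (pd ν) := by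
  unfold pd
  refine continuous_of_dominated (bound := fun _ => 1) ?_ ?_ (integrable_const _) ?_
  · intro x; fun_prop
  · intro x; refine ae_of_all _ fun v => ?_
    rw [Real.norm_of_nonneg (gphi_pos _).le]; exact gphi_le_one _
  · refine ae_of_all _ fun v => ?_; fun_prop

instance (ν : Measure ℝ) [IsProbabilityMeasure ν] : IsProbabilityMeasure (sm ν) := by
  unfold sm; exact Measure.isProbabilityMeasure_map (by fun_prop)

lemma lintegral_gaussian (f : ℝ → ENNReal) (hf : Measurable f) :
    ∫⁻ z, f z ∂(gaussianReal 0 1) = ∫⁻ z, ENNReal.ofReal (gphi z) * f z := by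
  rw [gaussianReal_of_var_ne_zero 0 (by simp), lintegral_withDensity_eq_lintegral_mul _
    (measurable_gaussianPDF 0 1) hf]
  rfl

lemma sm_eq (ν : Measure ℝ) [IsProbabilityMeasure ν] :
    sm ν = volume.withDensity (fun x => ENNReal.ofReal (pd ν x)) := by
  refine Measure.ext_of_lintegral _ fun f hf => ?_
  unfold sm
  rw [lintegral_map hf (by fun_prop), lintegral_prod _ (by fun_prop),
    lintegral_withDensity_eq_lintegral_mul _
      (by have := (pd_continuous ν).measurable; fun_prop) hf]
  have h1 : ∀ v : ℝ, ∫⁻ z, f (v + z) ∂(gaussianReal 0 1)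
      = ∫⁻ y, ENNReal.ofReal (gphi (y - v)) * f y := by
    intro v
    rw [lintegral_gaussian _ (by fun_prop),
      ← lintegral_add_right_eq_self (fun y => ENNReal.ofReal (gphi (y - v)) * f y) v]
    simp [add_comm]
  simp only [h1]
  rw [lintegral_lintegral_swap (by fun_prop)]
  refine lintegral_congr fun y => ?_
  rw [lintegral_mul_const _ (by fun_prop)]
  simp only [Pi.mul_apply]
  rw [pd, ofReal_integral_eq_lintegral_ofReal (gphi_integrable ν y)
    (ae_of_all _ fun v => (gphi_pos _).le)]

lemma integral_sm (ν : Measure ℝ) [IsProbabilityMeasure ν] (f : ℝ → ℝ) :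
    ∫ y, f y ∂(sm ν) = ∫ y, pd ν y * f y := by
  rw [sm_eq, integral_withDensity_eq_integral_toReal_smul
    (by have := (pd_continuous ν).measurable; fun_prop) (by simp)]
  refine integral_congr_ae (ae_of_all _ fun y => ?_)
  simp [ENNReal.toReal_ofReal (pd_pos ν y).le]

lemma dH1_integral (ν : Measure ℝ) [IsProbabilityMeasure ν] :
    dH1 (sm ν) = -∫ y, pd ν y * Real.logb 2 (pd ν y) := by
  unfold dH1
  congr 1
  have h : (sm ν).rnDeriv volume =ᵐ[volume] fun x => ENNReal.ofReal (pd ν x) := by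
    rw [sm_eq]
    exact Measure.rnDeriv_withDensity _ (by have := (pd_continuous ν).measurable; fun_prop)
  refine integral_congr_ae ?_
  filter_upwards [h] with x hx
  rw [hx, ENNReal.toReal_ofReal (pd_pos ν x).le]

lemma dH1_sm (ν : Measure ℝ) [IsProbabilityMeasure ν] : dH1 (sm ν) = Hn ν / Real.log 2 := by
  rw [dH1_integral, Hn, integral_sm, neg_div, ← integral_div]
  congr 1
  refine integral_congr_ae (ae_of_all _ fun y => ?_)
  simp only [Real.logb]; ring

lemma sq_int_gauss : Integrable (fun x : ℝ => x ^ 2) (gaussianReal 0 1) :=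
  (memLp_id_gaussianReal' 2 (by simp)).integrable_sq

lemma id_int_gauss : Integrable (fun x : ℝ => x) (gaussianReal 0 1) :=
  (memLp_id_gaussianReal' 1 (by simp)).integrable (by simp)

lemma integral_sq_gauss : ∫ x : ℝ, x ^ 2 ∂(gaussianReal 0 1) = 1 := by
  have h := variance_fun_id_gaussianReal (μ := 0) (v := 1)
  rw [variance_eq_integral (by fun_prop)] at h
  simpa [integral_id_gaussianReal] using h

lemma int_sub_sq {ν : Measure ℝ} [IsProbabilityMeasure ν] (h : Integrable (fun x : ℝ => x ^ 2) ν)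
    (a : ℝ) : Integrable (fun x : ℝ => (x - a) ^ 2) ν := by
  have h2 : MemLp (fun x : ℝ => x) 2 ν := (memLp_two_iff_integrable_sq (by fun_prop)).2 h
  exact (h2.sub (memLp_const a)).integrable_sq

lemma int_id {ν : Measure ℝ} [IsProbabilityMeasure ν] (h : Integrable (fun x : ℝ => x ^ 2) ν) :
    Integrable (fun x : ℝ => x) ν := by
  have h2 : MemLp (fun x : ℝ => x) 2 ν := (memLp_two_iff_integrable_sq (by fun_prop)).2 h
  exact h2.integrable (by norm_num)

lemma sm_sq {ν : Measure ℝ} [IsProbabilityMeasure ν] (h : Integrable (fun x : ℝ => x ^ 2) ν)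
    (a : ℝ) : Integrable (fun y : ℝ => (y - a) ^ 2) (sm ν) ∧
      ∫ y, (y - a) ^ 2 ∂(sm ν) = ∫ x, (x - a) ^ 2 ∂ν + 1 := by
  have e : ∀ p : ℝ × ℝ, (p.1 + p.2 - a) ^ 2 = (p.1 - a) ^ 2 + (2 * (p.1 - a)) * p.2 + p.2 ^ 2 := by
    intro p; ring
  have i1 : Integrable (fun p : ℝ × ℝ => (p.1 - a) ^ 2) (ν.prod (gaussianReal 0 1)) :=
    (int_sub_sq h a).comp_fst _
  have i2 : Integrable (fun p : ℝ × ℝ => (2 * (p.1 - a)) * p.2) (ν.prod (gaussianReal 0 1)) :=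
    (((int_id h).sub (integrable_const a)).const_mul 2).mul_prod id_int_gauss
  have i3 : Integrable (fun p : ℝ × ℝ => p.2 ^ 2) (ν.prod (gaussianReal 0 1)) :=
    sq_int_gauss.comp_snd _
  have m : AEMeasurable (fun p : ℝ × ℝ => p.1 + p.2) (ν.prod (gaussianReal 0 1)) := by fun_prop
  constructor
  · unfold sm
    rw [integrable_map_measure (by fun_prop) m]
    simp only [Function.comp_def, e]
    exact (i1.add i2).add i3
  · unfold sm
    rw [integral_map m (by fun_prop)]
    simp only [e]
    have i12 : Integrable (fun p : ℝ × ℝ => (p.1 - a) ^ 2 + (2 * (p.1 - a)) * p.2)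
      (ν.prod (gaussianReal 0 1)) := i1.add i2
    rw [integral_add i12 i3, integral_add i1 i2,
      integral_prod_mul (fun x : ℝ => 2 * (x - a)) (fun x : ℝ => x),
      integral_fun_fst (fun x : ℝ => (x - a) ^ 2), integral_fun_snd (fun x : ℝ => x ^ 2)]
    simp [integral_sq_gauss, integral_id_gaussianReal]

lemma log_pd_le (ν : Measure ℝ) [IsProbabilityMeasure ν] (x : ℝ) : Real.log (pd ν x) ≤ 0 :=
  Real.log_nonpos (pd_pos ν x).le (pd_le_one ν x)

lemma log_pd_ge {ν : Measure ℝ} [IsProbabilityMeasure ν] (h : Integrable (fun x : ℝ => x ^ 2) ν)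
    (x : ℝ) : -(1 / 2) * Real.log (2 * Real.pi) - (∫ v, (x - v) ^ 2 ∂ν) / 2 ≤ Real.log (pd ν x) := by
  have hi : Integrable (fun v : ℝ => (x - v) ^ 2) ν := by
    simpa [sub_sq_comm] using int_sub_sq h x
  have hi2 : Integrable (fun v : ℝ => Real.log (gphi (x - v))) ν := by
    simp only [log_gphi]
    exact (integrable_const _).sub (hi.div_const 2)
  set m := ∫ v, Real.log (gphi (x - v)) ∂ν with hm
  have hm' : m = -(1 / 2) * Real.log (2 * Real.pi) - (∫ v, (x - v) ^ 2 ∂ν) / 2 := by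
    rw [hm]; simp only [log_gphi]
    rw [integral_sub (integrable_const _) (hi.div_const 2), integral_div]; simp
  rw [← hm', Real.le_log_iff_exp_le (pd_pos ν x)]
  have key : ∫ v, Real.exp m * (1 + (Real.log (gphi (x - v)) - m)) ∂ν ≤ pd ν x := by
    unfold pd
    refine integral_mono ?_ (gphi_integrable ν x) fun v => ?_
    · exact ((integrable_const _).add (hi2.sub (integrable_const _))).const_mul _
    · simp only
      have h1 := Real.add_one_le_exp (Real.log (gphi (x - v)) - m)
      calc _ ≤ Real.exp m * Real.exp (Real.log (gphi (x - v)) - m) := by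
            apply mul_le_mul_of_nonneg_left _ (Real.exp_pos _).le; linarith
        _ = gphi (x - v) := by rw [← Real.exp_add, add_sub_cancel, Real.exp_log (gphi_pos _)]
  have hi3 : Integrable (fun v : ℝ => Real.log (gphi (x - v)) - m) ν :=
    hi2.sub (integrable_const _)
  rw [integral_const_mul, integral_add (integrable_const _) hi3,
    integral_sub hi2 (integrable_const _), ← hm] at key
  simpa using key

lemma log_pd_integrable {ν : Measure ℝ} [IsProbabilityMeasure ν]
    (h : Integrable (fun x : ℝ => x ^ 2) ν) :
    Integrable (fun y => Real.log (pd ν y)) (sm ν) := by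
  have hs := (sm_sq h 0).1
  simp only [sub_zero] at hs
  set K := ∫ v, v ^ 2 ∂ν
  have hb : ∀ x, (∫ v, (x - v) ^ 2 ∂ν) ≤ 2 * x ^ 2 + 2 * K := by
    intro x
    have : ∫ v, (2 * x ^ 2 + 2 * v ^ 2) ∂ν = 2 * x ^ 2 + 2 * K := by
      rw [integral_add (integrable_const _) (h.const_mul 2), integral_const]; simp [K, integral_const_mul]
    rw [← this]
    refine integral_mono (by simpa [sub_sq_comm] using int_sub_sq h x)
      ((integrable_const _).add (h.const_mul 2)) fun v => ?_
    simp only; nlinarith [sq_nonneg (x + v)]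
  have hd : Integrable (fun y : ℝ => (1 / 2) * Real.log (2 * Real.pi) + y ^ 2 + K) (sm ν) :=
    ((integrable_const _).add hs).add (integrable_const _)
  refine hd.mono' ?_ (ae_of_all _ fun y => ?_)
  · exact ((pd_continuous ν).measurable.log).aestronglyMeasurable
  · rw [Real.norm_of_nonpos (log_pd_le ν y)]
    linarith [log_pd_ge h y, hb y]

lemma Hn_nonneg (ν : Measure ℝ) [IsProbabilityMeasure ν] : 0 ≤ Hn ν := by
  unfold Hn
  rw [neg_nonneg]
  exact integral_nonpos fun y => log_pd_le ν y

/-- Gibbs upper bound. -/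
lemma Hn_le {ν : Measure ℝ} [IsProbabilityMeasure ν]
    (h : Integrable (fun x : ℝ => x ^ 2) ν) (a s : ℝ) (hs : 0 < s) :
    Hn ν ≤ (1 / 2) * Real.log (2 * Real.pi * s) + (∫ x, (x - a) ^ 2 ∂ν + 1) / (2 * s) := by
  obtain ⟨i1, e1⟩ := sm_sq h a
  set q : ℝ → ℝ := gaussianPDFReal a (Real.toNNReal s) with hq
  have hs' : Real.toNNReal s ≠ 0 := by simp [hs]
  have hqpos : ∀ y, 0 < q y := fun y => gaussianPDFReal_pos a _ y hs'
  have hlogq : ∀ y, Real.log (q y) = -(1 / 2) * Real.log (2 * Real.pi * s) - (y - a) ^ 2 / (2 * s) := by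
    intro y
    have : 0 < Real.sqrt (2 * Real.pi * s) := by positivity
    rw [hq, gaussianPDFReal, Real.coe_toNNReal s hs.le, Real.log_mul (by positivity)
      (Real.exp_pos _).ne', Real.log_exp, Real.log_inv, Real.log_sqrt (by positivity)]
    ring
  have hqm : Measurable q := measurable_gaussianPDFReal a _
  have hpm := (pd_continuous ν).measurable
  -- integral of q / p
  have hlin : ∫⁻ y, ENNReal.ofReal (q y / pd ν y) ∂(sm ν) = 1 := by
    rw [sm_eq, lintegral_withDensity_eq_lintegral_mul _ (by fun_prop) (by fun_prop),
      ← lintegral_gaussianPDFReal_eq_one a hs']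
    refine lintegral_congr fun y => ?_
    simp only [Pi.mul_apply]
    rw [← ENNReal.ofReal_mul (pd_pos ν y).le, mul_div_cancel₀ _ (pd_pos ν y).ne']
  have hnn : ∀ y, 0 ≤ q y / pd ν y := fun y => (div_pos (hqpos y) (pd_pos ν y)).le
  have hIntg : Integrable (fun y => q y / pd ν y) (sm ν) := by
    refine ⟨(hqm.div hpm).aestronglyMeasurable, ?_⟩
    rw [hasFiniteIntegral_iff_ofReal (ae_of_all _ hnn), hlin]; simp
  have hIntg1 : ∫ y, q y / pd ν y ∂(sm ν) = 1 := by
    rw [integral_eq_lintegral_of_nonneg_ae (ae_of_all _ hnn)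
      (hqm.div hpm).aestronglyMeasurable, hlin]; simp
  have hil : Integrable (fun y => Real.log (q y)) (sm ν) := by
    simp only [hlogq]
    exact (integrable_const _).sub (i1.div_const _)
  have hip := log_pd_integrable h
  have key : ∫ y, (Real.log (q y) - Real.log (pd ν y)) ∂(sm ν)
      ≤ ∫ y, (q y / pd ν y - 1) ∂(sm ν) := by
    refine integral_mono (hil.sub hip) (hIntg.sub (integrable_const _)) fun y => ?_
    simp only
    rw [← Real.log_div (hqpos y).ne' (pd_pos ν y).ne']
    exact Real.log_le_sub_one_of_pos (div_pos (hqpos y) (pd_pos ν y))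
  rw [integral_sub hil hip, integral_sub hIntg (integrable_const _), hIntg1] at key
  have e2 : ∫ y, Real.log (q y) ∂(sm ν)
      = -(1 / 2) * Real.log (2 * Real.pi * s) - (∫ x, (x - a) ^ 2 ∂ν + 1) / (2 * s) := by
    simp only [hlogq]
    rw [integral_sub (integrable_const _) (i1.div_const _), integral_div, e1]; simp
  rw [e2] at key
  simp at key
  unfold Hn
  linarith

/-! ### Monotone transport -/

lemma sm_real_Iic (ν : Measure ℝ) [IsProbabilityMeasure ν] (x : ℝ) :
    (sm ν).real (Set.Iic x) = ∫ y in Set.Iic x, pd ν y := by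
  have hpm := (pd_continuous ν).measurable
  rw [Measure.real, sm_eq, withDensity_apply _ measurableSet_Iic,
    integral_eq_lintegral_of_nonneg_ae (ae_of_all _ fun y => (pd_pos ν y).le)
      hpm.aestronglyMeasurable]

lemma pd_integrable (ν : Measure ℝ) [IsProbabilityMeasure ν] : Integrable (pd ν) := by
  have hpm := (pd_continuous ν).measurable
  refine ⟨hpm.aestronglyMeasurable, ?_⟩
  rw [hasFiniteIntegral_iff_ofReal (ae_of_all _ fun y => (pd_pos ν y).le)]
  have h : sm ν Set.univ = 1 := measure_univ
  rw [sm_eq, withDensity_apply _ MeasurableSet.univ, Measure.restrict_univ] at h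
  rw [h]; simp

/-- the cumulative distribution function of `ν * N(0,1)` -/
def cF (ν : Measure ℝ) (x : ℝ) : ℝ := (sm ν).real (Set.Iic x)

lemma cF_hasDerivAt (ν : Measure ℝ) [IsProbabilityMeasure ν] (x : ℝ) :
    HasDerivAt (cF ν) (pd ν x) x := by
  have hi := pd_integrable ν
  have hc := pd_continuous ν
  have e : cF ν = fun x => (∫ y in Set.Iic 0, pd ν y) + ∫ y in (0:ℝ)..x, pd ν y := by
    funext x
    rw [← intervalIntegral.integral_Iic_sub_Iic hi.integrableOn hi.integrableOn, cF, sm_real_Iic]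
    ring
  rw [e]
  exact (intervalIntegral.integral_hasDerivAt_right (hc.intervalIntegrable _ _)
    (hc.stronglyMeasurableAtFilter _ _) hc.continuousAt).const_add _

lemma cF_strictMono (ν : Measure ℝ) [IsProbabilityMeasure ν] : StrictMono (cF ν) :=
  strictMono_of_hasDerivAt_pos (fun x => cF_hasDerivAt ν x) (fun x => pd_pos ν x)

lemma cF_continuous (ν : Measure ℝ) [IsProbabilityMeasure ν] : Continuous (cF ν) :=
  continuous_iff_continuousAt.2 fun x => (cF_hasDerivAt ν x).continuousAt

lemma cF_mem (ν : Measure ℝ) [IsProbabilityMeasure ν] (x : ℝ) : 0 < cF ν x ∧ cF ν x < 1 := by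
  have h1 := cF_strictMono ν (show x - 1 < x by linarith)
  have h2 := cF_strictMono ν (show x < x + 1 by linarith)
  have h3 : 0 ≤ cF ν (x - 1) := measureReal_nonneg
  have h4 : cF ν (x + 1) ≤ 1 := measureReal_le_one
  constructor <;> linarith

lemma cF_surj (ν : Measure ℝ) [IsProbabilityMeasure ν] (y : ℝ) (h0 : 0 < y) (h1 : y < 1) :
    ∃ x, cF ν x = y := by
  have e : ∀ x, cF ν x = cdf (sm ν) x := fun x => (cdf_eq_real (sm ν) x).symm
  have ha : ∃ a, cF ν a ≤ y := by
    obtain ⟨a, ha⟩ := ((tendsto_cdf_atBot (sm ν)).eventually (gt_mem_nhds h0)).exists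
    exact ⟨a, by rw [e]; exact ha.le⟩
  have hb : ∃ b, y ≤ cF ν b := by
    obtain ⟨b, hb⟩ := ((tendsto_cdf_atTop (sm ν)).eventually (lt_mem_nhds h1)).exists
    exact ⟨b, by rw [e]; exact hb.le⟩
  exact mem_range_of_exists_le_of_exists_ge (cF_continuous ν) ha hb

lemma exists_transport_aux (ν η : Measure ℝ) [IsProbabilityMeasure ν] [IsProbabilityMeasure η] :
    ∃ T : ℝ → ℝ, StrictMono T ∧ Continuous T ∧
      (∀ x, HasDerivAt T (pd η x / pd ν (T x)) x) ∧ (sm η).map T = sm ν := by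
  have hex : ∀ x, ∃ w, cF ν w = cF η x := fun x =>
    cF_surj ν _ (cF_mem η x).1 (cF_mem η x).2
  choose T hT using hex
  have hmono : StrictMono T := by
    intro x y hxy
    rw [← (cF_strictMono ν).lt_iff_lt, hT, hT]
    exact cF_strictMono η hxy
  have hsurj : Function.Surjective T := by
    intro w
    obtain ⟨x, hx⟩ := cF_surj η _ (cF_mem ν w).1 (cF_mem ν w).2
    exact ⟨x, (cF_strictMono ν).injective (by rw [hT, hx])⟩
  have hcont : Continuous T := hmono.monotone.continuous_of_surjective hsurj
  refine ⟨T, hmono, hcont, ?_, ?_⟩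
  · intro x
    have h1 := hasDerivAt_iff_tendsto_slope.1 (cF_hasDerivAt η x)
    have h2 := hasDerivAt_iff_tendsto_slope.1 (cF_hasDerivAt ν (T x))
    have h3 : Filter.Tendsto T (nhdsWithin x {x}ᶜ) (nhdsWithin (T x) {T x}ᶜ) := by
      refine tendsto_nhdsWithin_iff.2 ⟨hcont.continuousAt.tendsto.mono_left nhdsWithin_le_nhds, ?_⟩
      filter_upwards [self_mem_nhdsWithin] with y hy
      simpa using fun h => hy (hmono.injective h)
    have h4 := h1.div (h2.comp h3) (pd_pos ν (T x)).ne'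
    rw [hasDerivAt_iff_tendsto_slope]
    refine h4.congr' ?_
    filter_upwards [self_mem_nhdsWithin] with y hy
    have hy1 : y - x ≠ 0 := sub_ne_zero.2 hy
    have hy2 : T y - T x ≠ 0 := sub_ne_zero.2 fun h => hy (hmono.injective h)
    have hy3 : cF η y - cF η x ≠ 0 := sub_ne_zero.2 fun h => hy ((cF_strictMono η).injective h)
    simp only [Pi.div_apply, Function.comp, slope_def_field, hT]
    field_simp
  · have : IsProbabilityMeasure ((sm η).map T) :=
      Measure.isProbabilityMeasure_map hcont.aemeasurable
    refine Measure.ext_of_Iic _ _ fun w => ?_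
    obtain ⟨x, rfl⟩ := hsurj w
    rw [Measure.map_apply hcont.measurable measurableSet_Iic]
    have : T ⁻¹' Set.Iic (T x) = Set.Iic x := by
      ext y; simp [hmono.le_iff_le]
    rw [this]
    have h := hT x
    unfold cF at h
    rw [measureReal_def, measureReal_def, ENNReal.toReal_eq_toReal_iff' (measure_ne_top _ _) (measure_ne_top _ _)] at h
    exact h.symm

lemma sm_dirac : sm (Measure.dirac 0) = gaussianReal 0 1 := by
  unfold sm
  rw [Measure.dirac_prod, Measure.map_map (by fun_prop) (by fun_prop)]
  simp [Function.comp_def]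

lemma pd_dirac (x : ℝ) : pd (Measure.dirac 0) x = gphi x := by
  unfold pd; simp

lemma exists_transport (ν : Measure ℝ) [IsProbabilityMeasure ν] :
    ∃ T : ℝ → ℝ, StrictMono T ∧ Continuous T ∧
      (∀ x, HasDerivAt T (gphi x / pd ν (T x)) x) ∧ (gaussianReal 0 1).map T = sm ν := by
  simpa [sm_dirac, pd_dirac] using exists_transport_aux ν (Measure.dirac 0)

/-! ### Rotation invariance -/

lemma gauss_rot (C S : ℝ) (h : C ^ 2 + S ^ 2 = 1) :
    ((gaussianReal 0 1).prod (gaussianReal 0 1)).map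
      (fun p : ℝ × ℝ => (C * p.1 - S * p.2, S * p.1 + C * p.2))
      = (gaussianReal 0 1).prod (gaussianReal 0 1) := by
  obtain ⟨θ, h1, h2⟩ : ∃ θ : ℝ, Real.cos θ = C ∧ Real.sin θ = S := by
    have hz : ‖(⟨C, S⟩ : ℂ)‖ = 1 := by
      rw [Complex.norm_def, Complex.normSq_mk, Real.sqrt_eq_one]; linarith
    refine ⟨Complex.arg ⟨C, S⟩, ?_, ?_⟩
    · rw [Complex.cos_arg (by intro h0; rw [h0] at hz; simp at hz), hz]; simp
    · rw [Complex.sin_arg, hz]; simp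
  have := IsGaussian.map_rotation_eq_self (μ := gaussianReal 0 1)
    (by simp [integral_id_gaussianReal]) (-θ)
  convert this using 2
  funext p
  simp [ContinuousLinearMap.rotation_apply, h1, h2]
  ring

lemma gauss_comb (b c : ℝ) (h : b ^ 2 + c ^ 2 = 1) :
    ((gaussianReal 0 1).prod (gaussianReal 0 1)).map (fun p : ℝ × ℝ => b * p.1 + c * p.2)
      = gaussianReal 0 1 := by
  have h1 := gauss_rot b (-c) (by linarith [neg_sq c])
  have h2 := congrArg (fun m => m.map Prod.fst) h1
  simp only [Measure.map_fst_prod, measure_univ, one_smul] at h2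
  rw [Measure.map_map (by fun_prop) (by fun_prop)] at h2
  refine Eq.trans ?_ h2
  congr 1
  funext p; simp

/-! ### The entropy power inequality with Gaussian noise (linearised) -/

lemma map_affine_sm (ν : Measure ℝ) [IsProbabilityMeasure ν] (a b c : ℝ) (h : b ^ 2 + c ^ 2 = 1) :
    ((sm ν).prod (gaussianReal 0 1)).map (fun p : ℝ × ℝ => b * p.1 + a + c * p.2)
      = sm (ν.map (fun v => b * v + a)) := by
  have hp : IsProbabilityMeasure (ν.map (fun v => b * v + a)) :=
    Measure.isProbabilityMeasure_map (by fun_prop)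
  refine Measure.ext_of_lintegral _ fun f hf => ?_
  unfold sm
  rw [lintegral_map hf (by fun_prop), lintegral_prod _ (by fun_prop),
    lintegral_map (by fun_prop) (by fun_prop), lintegral_prod _ (by fun_prop),
    lintegral_map hf (by fun_prop), lintegral_prod _ (by fun_prop),
    lintegral_map (by fun_prop) (by fun_prop)]
  refine lintegral_congr fun v => ?_
  simp only
  have e := gauss_comb b c h
  conv_rhs => rw [← e]
  rw [lintegral_map (by fun_prop) (by fun_prop), lintegral_prod _ (by fun_prop)]
  refine lintegral_congr fun z => lintegral_congr fun y => ?_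
  congr 1; ring

lemma sq_map_affine {ν : Measure ℝ} [IsProbabilityMeasure ν]
    (h : Integrable (fun x : ℝ => x ^ 2) ν) (a b : ℝ) :
    Integrable (fun x : ℝ => x ^ 2) (ν.map (fun v => b * v + a)) := by
  rw [integrable_map_measure (by fun_prop) (by fun_prop)]
  have h2 : MemLp (fun x : ℝ => x) 2 ν := (memLp_two_iff_integrable_sq (by fun_prop)).2 h
  exact ((h2.const_mul b).add (memLp_const a)).integrable_sq

lemma log_gphi_integrable : Integrable (fun x => Real.log (gphi x)) (gaussianReal 0 1) := by
  simp only [log_gphi]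
  exact (integrable_const _).sub (sq_int_gauss.div_const 2)

lemma integral_log_gphi :
    ∫ x, Real.log (gphi x) ∂(gaussianReal 0 1) = -((1 / 2) * Real.log (2 * Real.pi) + 1 / 2) := by
  simp only [log_gphi]
  rw [integral_sub (integrable_const _) (sq_int_gauss.div_const 2), integral_div,
    integral_sq_gauss]
  simp; ring

lemma log_affine_ge (l t : ℝ) (h0 : 0 ≤ l) (h1 : l ≤ 1) (ht : 0 < t) :
    l * Real.log t ≤ Real.log (l * t + (1 - l)) := by
  have h := strictConcaveOn_log_Ioi.concaveOn.2 (Set.mem_Ioi.2 ht)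
    (Set.mem_Ioi.2 zero_lt_one) h0 (sub_nonneg.2 h1) (add_sub_cancel l 1)
  simpa using h

lemma epi_lin {ν : Measure ℝ} [IsProbabilityMeasure ν]
    (h : Integrable (fun x : ℝ => x ^ 2) ν) (a b c m : ℝ) (hbc : b ^ 2 + c ^ 2 = 1) :
    ((1 / 2) * Real.log (2 * Real.pi) + 1 / 2)
      + (1 / 2) * Real.log (b ^ 2 * Real.exp (2 * m) + c ^ 2)
      + (b ^ 2 * Real.exp (2 * m) / (b ^ 2 * Real.exp (2 * m) + c ^ 2))
        * (Hn ν - ((1 / 2) * Real.log (2 * Real.pi) + 1 / 2) - m)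
      ≤ Hn (ν.map (fun v => b * v + a)) := by
  set hZ := (1 / 2) * Real.log (2 * Real.pi) + 1 / 2 with hhZ
  set r2 := b ^ 2 * Real.exp (2 * m) + c ^ 2 with hr2
  set l := b ^ 2 * Real.exp (2 * m) / r2 with hl
  set ρ := ν.map (fun v => b * v + a) with hρ
  have hρp : IsProbabilityMeasure ρ := Measure.isProbabilityMeasure_map (by fun_prop)
  have hρ2 : Integrable (fun x : ℝ => x ^ 2) ρ := sq_map_affine h a b
  have hr2pos : 0 < r2 := by
    rcases eq_or_ne b 0 with hb | hb
    · have : c ^ 2 = 1 := by rw [hb] at hbc; linarith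
      rw [hr2, this, hb]; norm_num
    · positivity
  set r := Real.sqrt r2 with hr
  have hrpos : 0 < r := Real.sqrt_pos.2 hr2pos
  have hrr : r * r = r2 := Real.mul_self_sqrt hr2pos.le
  have he2 : Real.exp (2 * m) = Real.exp m * Real.exp m := by rw [← Real.exp_add]; ring_nf
  set C := b * Real.exp m / r with hC
  set S := c / r with hS
  have hCS : C ^ 2 + S ^ 2 = 1 := by
    rw [hC, hS, div_pow, div_pow, ← add_div, div_eq_one_iff_eq (by positivity), pow_two r, hrr, hr2,
      he2]; ring
  have hl0 : 0 ≤ l := by positivity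
  have hl1 : l ≤ 1 := by
    rw [hl, div_le_one hr2pos, hr2]; nlinarith [sq_nonneg c]
  obtain ⟨T, hTm, hTc, hTd, hTl⟩ := exists_transport ν
  set T' : ℝ → ℝ := fun u => gphi u / pd ν (T u) with hT'
  have hT'pos : ∀ u, 0 < T' u := fun u => div_pos (gphi_pos u) (pd_pos ν _)
  have hpν := pd_continuous ν
  have hpρ := pd_continuous ρ
  have hT'c : Continuous T' :=
    gphi_continuous.div (hpν.comp hTc) (fun u => (pd_pos ν _).ne')
  set θ : ℝ × ℝ → ℝ := fun p => b * T (C * p.1 - S * p.2) + a + c * (S * p.1 + C * p.2) with hθ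
  set D : ℝ × ℝ → ℝ := fun p => b * C * T' (C * p.1 - S * p.2) + c * S with hD
  have hθc : Continuous θ := by fun_prop
  have hDc : Continuous D := by fun_prop
  have hDeq : ∀ p, D p = r * (l * (T' (C * p.1 - S * p.2) * Real.exp (-m)) + (1 - l)) := by
    intro p
    have e1 : 1 - l = c ^ 2 / r2 := by rw [hl, eq_div_iff hr2pos.ne', sub_mul,
      div_mul_cancel₀ _ hr2pos.ne', hr2]; ring
    have e3 : Real.exp m * Real.exp (-m) = 1 := by rw [← Real.exp_add]; simp
    rw [e1, hl, ← hrr, he2]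
    simp only [hD]
    generalize T' (C * p.1 - S * p.2) = t
    rw [hC, hS]
    field_simp
    linear_combination (-(b ^ 2 * Real.exp m * t)) * e3
  have hmix : ∀ t, 0 < t → 0 < l * t + (1 - l) := by
    intro t ht
    rcases eq_or_lt_of_le hl1 with h1 | h1
    · rw [h1]; linarith
    · have := mul_nonneg hl0 ht.le; linarith
  have hDpos : ∀ p, 0 < D p := by
    intro p; rw [hDeq]
    exact mul_pos hrpos (hmix _ (mul_pos (hT'pos _) (Real.exp_pos _)))
  have hlogD : ∀ p, l * (Real.log (T' (C * p.1 - S * p.2)) - m) + (1 / 2) * Real.log r2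
      ≤ Real.log (D p) := by
    intro p
    have ht := mul_pos (hT'pos (C * p.1 - S * p.2)) (Real.exp_pos (-m))
    have h1 := log_affine_ge l _ hl0 hl1 ht
    rw [Real.log_mul (hT'pos _).ne' (Real.exp_pos _).ne', Real.log_exp] at h1
    rw [hDeq, Real.log_mul hrpos.ne' (hmix _ ht).ne', hr, Real.log_sqrt hr2pos.le]
    linarith
  set γ := gaussianReal 0 1 with hγ
  set M := γ.prod γ with hM
  have hrot : M.map (fun p : ℝ × ℝ => (C * p.1 - S * p.2, S * p.1 + C * p.2)) = M :=
    gauss_rot C S hCS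
  -- law of θ
  have hθlaw : M.map θ = sm ρ := by
    rw [hρ, ← map_affine_sm ν a b c hbc, ← hTl]
    have e1 : (γ.map T).prod γ = M.map (Prod.map T id) := by
      rw [hM, ← Measure.map_prod_map _ _ hTc.measurable measurable_id, Measure.map_id]
    rw [e1, Measure.map_map (by fun_prop) (by fun_prop)]
    conv_rhs => rw [← hrot]
    rw [Measure.map_map (by fun_prop) (by fun_prop)]
    rfl
  have hulaw : M.map (fun p : ℝ × ℝ => C * p.1 - S * p.2) = γ := by
    have := congrArg (fun m => m.map Prod.fst) hrot
    simp only [hM, Measure.map_fst_prod, measure_univ, one_smul] at this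
    rw [Measure.map_map (by fun_prop) (by fun_prop)] at this
    exact this
  -- first integral
  have i1 : Integrable (fun p => Real.log (pd ρ (θ p))) M := by
    have := log_pd_integrable hρ2
    rw [← hθlaw, integrable_map_measure hpρ.measurable.log.aestronglyMeasurable
      hθc.aemeasurable] at this
    exact this
  have e1 : ∫ p, Real.log (pd ρ (θ p)) ∂M = -Hn ρ := by
    rw [Hn, neg_neg, ← hθlaw, integral_map hθc.aemeasurable
      hpρ.measurable.log.aestronglyMeasurable]
  -- second integral
  have j2 : Integrable (fun u => Real.log (pd ν (T u))) γ := by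
    have := log_pd_integrable h
    rw [← hTl, integrable_map_measure hpν.measurable.log.aestronglyMeasurable
      hTc.aemeasurable] at this
    exact this
  have f2 : ∫ u, Real.log (pd ν (T u)) ∂γ = -Hn ν := by
    rw [Hn, neg_neg, ← hTl, integral_map hTc.aemeasurable
      hpν.measurable.log.aestronglyMeasurable]
  have elog : ∀ u, Real.log (T' u) = Real.log (gphi u) - Real.log (pd ν (T u)) := fun u =>
    Real.log_div (gphi_pos u).ne' (pd_pos ν _).ne'
  have k2 : Integrable (fun u => Real.log (T' u)) γ := by
    simp only [elog]; exact log_gphi_integrable.sub j2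
  have g2 : ∫ u, Real.log (T' u) ∂γ = -hZ + Hn ν := by
    simp only [elog]; rw [integral_sub log_gphi_integrable j2, f2, integral_log_gphi]; ring
  have mu : AEMeasurable (fun p : ℝ × ℝ => C * p.1 - S * p.2) M := by fun_prop
  have i2 : Integrable (fun p : ℝ × ℝ => Real.log (T' (C * p.1 - S * p.2))) M := by
    have := k2
    rw [← hulaw, integrable_map_measure hT'c.measurable.log.aestronglyMeasurable mu] at this
    exact this
  have e2 : ∫ p : ℝ × ℝ, Real.log (T' (C * p.1 - S * p.2)) ∂M = -hZ + Hn ν := by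
    rw [← g2]
    conv_rhs => rw [← hulaw]
    rw [integral_map mu hT'c.measurable.log.aestronglyMeasurable]
  -- third integral
  have i3 : Integrable (fun p : ℝ × ℝ => Real.log (gphi p.1)) M := log_gphi_integrable.comp_fst _
  have e3 : ∫ p : ℝ × ℝ, Real.log (gphi p.1) ∂M = -hZ := by
    rw [hM, integral_fun_fst (fun x => Real.log (gphi x)), integral_log_gphi]; simp [hhZ]
  -- the comparison function
  set G : ℝ × ℝ → ℝ := fun p => pd ρ (θ p) * D p / gphi p.1 with hG
  have hGpos : ∀ p, 0 < G p := fun p =>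
    div_pos (mul_pos (pd_pos ρ _) (hDpos p)) (gphi_pos _)
  have hGc : Continuous G :=
    ((hpρ.comp hθc).mul hDc).div (gphi_continuous.comp continuous_fst) (fun p => (gphi_pos _).ne')
  have hlin : ∫⁻ p, ENNReal.ofReal (G p) ∂M ≤ 1 := by
    have hGm : Measurable (fun p => ENNReal.ofReal (G p)) := hGc.measurable.ennreal_ofReal
    rw [hM, lintegral_prod_symm _ hGm.aemeasurable]
    calc _ ≤ ∫⁻ y, (1 : ENNReal) ∂γ := by
          refine lintegral_mono fun y => ?_
          rw [hγ, lintegral_gaussian _ (by fun_prop)]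
          have e : ∀ x, ENNReal.ofReal (gphi x) * ENNReal.ofReal (G (x, y))
              = ENNReal.ofReal |D (x, y)| * ENNReal.ofReal (pd ρ (θ (x, y))) := by
            intro x
            rw [← ENNReal.ofReal_mul (gphi_pos x).le, ← ENNReal.ofReal_mul (abs_nonneg _),
              abs_of_pos (hDpos _)]
            congr 1
            change gphi x * (pd ρ (θ (x, y)) * D (x, y) / gphi x) = _
            have := (gphi_pos x).ne'
            field_simp
          simp only [e]
          have hder : ∀ x, HasDerivAt (fun x => θ (x, y)) (D (x, y)) x := by
            intro x
            have d1 : HasDerivAt (fun x : ℝ => C * x - S * y) C x := by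
              simpa using ((hasDerivAt_id x).const_mul C).sub_const (S * y)
            have d2 : HasDerivAt (fun x : ℝ => S * x + C * y) S x := by
              simpa using ((hasDerivAt_id x).const_mul S).add_const (C * y)
            have d3 := (((hTd (C * x - S * y)).comp x d1).const_mul b).add_const a
            have d4 := d3.add (d2.const_mul c)
            refine HasDerivAt.congr_deriv (f := fun x => θ (x, y)) d4 ?_
            change b * (T' (C * x - S * y) * C) + c * S = b * C * T' (C * x - S * y) + c * S
            ring
          have hinj : StrictMono (fun x => θ (x, y)) :=
            strictMono_of_hasDerivAt_pos hder (fun x => hDpos _)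
          have hcv := lintegral_image_eq_lintegral_abs_deriv_mul (s := Set.univ)
            MeasurableSet.univ (fun x _ => (hder x).hasDerivWithinAt) hinj.injective.injOn
            (fun w => ENNReal.ofReal (pd ρ w))
          rw [Measure.restrict_univ] at hcv
          rw [← hcv]
          have hone : ∫⁻ w, ENNReal.ofReal (pd ρ w) = 1 := by
            have h : sm ρ Set.univ = 1 := measure_univ
            rwa [sm_eq, withDensity_apply _ MeasurableSet.univ, Measure.restrict_univ] at h
          rw [← hone]
          exact setLIntegral_le_lintegral _ _
      _ = 1 := by simp
  have hGi : Integrable G M := by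
    refine ⟨hGc.aestronglyMeasurable, ?_⟩
    rw [hasFiniteIntegral_iff_ofReal (ae_of_all _ fun p => (hGpos p).le)]
    exact hlin.trans_lt (by simp)
  have hGle : ∫ p, G p ∂M ≤ 1 := by
    rw [integral_eq_lintegral_of_nonneg_ae (ae_of_all _ fun p => (hGpos p).le)
      hGc.aestronglyMeasurable]
    exact ENNReal.toReal_le_of_le_ofReal zero_le_one (by simpa using hlin)
  have i23 : Integrable (fun p : ℝ × ℝ => l * (Real.log (T' (C * p.1 - S * p.2)) - m)
      + (1 / 2) * Real.log r2) M :=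
    ((i2.sub (integrable_const m)).const_mul l).add (integrable_const _)
  have i13 : Integrable (fun p : ℝ × ℝ => Real.log (pd ρ (θ p)) - Real.log (gphi p.1)) M :=
    i1.sub i3
  have key : ∫ p : ℝ × ℝ, ((Real.log (pd ρ (θ p)) - Real.log (gphi p.1))
      + (l * (Real.log (T' (C * p.1 - S * p.2)) - m) + (1 / 2) * Real.log r2)) ∂M
      ≤ ∫ p, (G p - 1) ∂M := by
    refine integral_mono (i13.add i23) (hGi.sub (integrable_const _)) fun p => ?_
    have h1 := hlogD p
    have h2 := Real.log_le_sub_one_of_pos (hGpos p)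
    have h3 : Real.log (G p) = Real.log (pd ρ (θ p)) + Real.log (D p) - Real.log (gphi p.1) := by
      simp only [hG]
      rw [Real.log_div (mul_pos (pd_pos ρ _) (hDpos p)).ne' (gphi_pos _).ne',
        Real.log_mul (pd_pos ρ _).ne' (hDpos p).ne']
    simp only
    linarith
  have i2m : Integrable (fun p : ℝ × ℝ => Real.log (T' (C * p.1 - S * p.2)) - m) M :=
    i2.sub (integrable_const m)
  rw [integral_add i13 i23, integral_sub i1 i3, integral_add (i2m.const_mul l) (integrable_const _),
    integral_const_mul, integral_sub i2 (integrable_const _), integral_sub hGi (integrable_const _),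
    e1, e2, e3] at key
  simp only [integral_const, probReal_univ, one_smul] at key
  have : l * (-hZ + Hn ν - m) = l * (Hn ν - hZ - m) := by ring
  linarith

/-! ### Conditional laws -/

lemma law_add_gauss {Ω : Type*} [MeasurableSpace Ω] {μ : Measure Ω} [IsProbabilityMeasure μ]
    {V N : Ω → ℝ} (hV : Measurable V) (hN : Measurable N)
    (hNlaw : μ.map N = gaussianReal 0 1) (hind : IndepFun V N μ) :
    μ.map (fun ω => V ω + N ω) = sm (μ.map V) := by
  have h := (indepFun_iff_map_prod_eq_prod_map_map hV.aemeasurable hN.aemeasurable).1 hind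
  unfold sm
  rw [← hNlaw, ← h, Measure.map_map (by fun_prop) (by fun_prop)]
  rfl

lemma condDistrib_sm {Ω β : Type*} [MeasurableSpace Ω] [MeasurableSpace β]
    {μ : Measure Ω} [IsProbabilityMeasure μ] {Q : Ω → β} {V N : Ω → ℝ} {A : β × ℝ → ℝ}
    (hQ : Measurable Q) (hV : Measurable V) (hN : Measurable N) (hA : Measurable A)
    (hNlaw : μ.map N = gaussianReal 0 1) (hind : IndepFun N (fun ω => (Q ω, V ω)) μ) :
    ∀ᵐ ω ∂μ, condDistrib (fun ω => A (Q ω, V ω) + N ω) Q μ (Q ω)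
      = sm ((condDistrib V Q μ (Q ω)).map (fun v => A (Q ω, v))) := by
  set κ := condDistrib V Q μ with hκ
  let η : Kernel β ℝ := (((Kernel.id ×ₖ κ).map A) ×ₖ (Kernel.const β (gaussianReal 0 1))).map
    (fun p : ℝ × ℝ => p.1 + p.2)
  have : IsMarkovKernel ((Kernel.id ×ₖ κ).map A) := Kernel.IsMarkovKernel.map _ hA
  have hηM : IsMarkovKernel η := Kernel.IsMarkovKernel.map _ (by fun_prop)
  have hη : ∀ q, η q = sm ((κ q).map (fun v => A (q, v))) := by
    intro q
    simp only [η]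
    rw [Kernel.map_apply _ (by fun_prop), Kernel.prod_apply, Kernel.map_apply _ hA,
      Kernel.prod_apply, Kernel.id_apply, Measure.dirac_prod, Measure.map_map hA (by fun_prop),
      Kernel.const_apply]
    rfl
  have hmain : μ.map (fun ω => (Q ω, A (Q ω, V ω) + N ω)) = μ.map Q ⊗ₘ η := by
    refine Measure.ext_of_lintegral _ fun f hf => ?_
    rw [Measure.lintegral_compProd hf]
    have e1 : ∀ q, ∫⁻ y, f (q, y) ∂(η q)
        = ∫⁻ v, ∫⁻ z, f (q, A (q, v) + z) ∂(gaussianReal 0 1) ∂(κ q) := by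
      intro q
      rw [hη, sm, lintegral_map (by fun_prop) (by fun_prop), lintegral_prod _ (by fun_prop),
        lintegral_map (Measurable.lintegral_prod_right (by fun_prop)) (by fun_prop)]
    simp only [e1]
    have hF : Measurable (fun p : β × ℝ => ∫⁻ z, f (p.1, A p + z) ∂(gaussianReal 0 1)) :=
      Measurable.lintegral_prod_right (by fun_prop)
    rw [← Measure.lintegral_compProd
      (f := fun p : β × ℝ => ∫⁻ z, f (p.1, A p + z) ∂(gaussianReal 0 1)) hF, hκ,
      compProd_map_condDistrib hV.aemeasurable]
    have h := (indepFun_iff_map_prod_eq_prod_map_map (hQ.prodMk hV).aemeasurable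
      hN.aemeasurable).1 hind.symm
    rw [hNlaw] at h
    rw [← lintegral_prod (fun p : (β × ℝ) × ℝ => f (p.1.1, A p.1 + p.2)) (by fun_prop), ← h,
      lintegral_map hf (by fun_prop), lintegral_map (by fun_prop) (by fun_prop)]
  have h := condDistrib_ae_eq_of_measure_eq_compProd_of_measurable hQ
    (Y := fun ω => A (Q ω, V ω) + N ω) (by fun_prop) hmain
  filter_upwards [ae_of_ae_map hQ.aemeasurable h] with ω hω
  rw [hω, hη]

lemma dH1_kernel_measurable {β : Type*} [MeasurableSpace β] (κ : Kernel β ℝ) [IsMarkovKernel κ]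
    {A : β × ℝ → ℝ} (hA : Measurable A) :
    Measurable (fun q => Hn ((κ q).map (fun v => A (q, v)))) := by
  have hp : ∀ q, IsProbabilityMeasure ((κ q).map (fun v => A (q, v))) := fun q =>
    Measure.isProbabilityMeasure_map (by fun_prop)
  have e : ∀ q, Hn ((κ q).map (fun v => A (q, v)))
      = -∫ y, (∫ v, gphi (y - A (q, v)) ∂(κ q)) * Real.log (∫ v, gphi (y - A (q, v)) ∂(κ q)) := by
    intro q
    have e2 : ∀ y, pd ((κ q).map (fun v => A (q, v))) y = ∫ v, gphi (y - A (q, v)) ∂(κ q) := by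
      intro y
      unfold pd
      rw [integral_map (by fun_prop) (by fun_prop)]
    rw [Hn, integral_sm]
    simp only [e2]
  simp only [e]
  have hsm : StronglyMeasurable (fun p : β × ℝ => ∫ v, gphi (p.2 - A (p.1, v)) ∂(κ p.1)) := by
    have hf : StronglyMeasurable (fun x : (β × ℝ) × ℝ => gphi (x.1.2 - A (x.1.1, x.2))) := by
      apply Measurable.stronglyMeasurable; fun_prop
    exact hf.integral_kernel_prod_right' (κ := Kernel.prodMkRight ℝ κ)
  have hm := hsm.measurable
  have h2 : StronglyMeasurable (fun p : β × ℝ => (∫ v, gphi (p.2 - A (p.1, v)) ∂(κ p.1))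
      * Real.log (∫ v, gphi (p.2 - A (p.1, v)) ∂(κ p.1))) :=
    (hm.mul hm.log).stronglyMeasurable
  exact h2.integral_prod_right.measurable.neg

lemma cond_ent {Ω β : Type*} [MeasurableSpace Ω] [MeasurableSpace β]
    {μ : Measure Ω} [IsProbabilityMeasure μ] {Q : Ω → β} {V N : Ω → ℝ} {A : β × ℝ → ℝ}
    (hQ : Measurable Q) (hV : Measurable V) (hN : Measurable N) (hA : Measurable A)
    (hNlaw : μ.map N = gaussianReal 0 1) (hind : IndepFun N (fun ω => (Q ω, V ω)) μ)
    (hA2 : Integrable (fun ω => A (Q ω, V ω) ^ 2) μ) :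
    Integrable (fun ω => Hn ((condDistrib V Q μ (Q ω)).map (fun v => A (Q ω, v)))) μ ∧
    condDiffEnt μ (fun ω => A (Q ω, V ω) + N ω) Q
      = (∫ ω, Hn ((condDistrib V Q μ (Q ω)).map (fun v => A (Q ω, v))) ∂μ) / Real.log 2 := by
  set κ := condDistrib V Q μ with hκ
  have hp : ∀ q, IsProbabilityMeasure ((κ q).map (fun v => A (q, v))) := fun q =>
    Measure.isProbabilityMeasure_map (by fun_prop)
  constructor
  · have hA2' : Integrable (fun p : β × ℝ => A p ^ 2) (μ.map fun ω => (Q ω, V ω)) := by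
      rw [integrable_map_measure (by fun_prop) (by fun_prop)]; exact hA2
    have h1 := hA2'.condDistrib_ae hQ.aemeasurable hV.aemeasurable
    have h2 := hA2'.integral_condDistrib hQ.aemeasurable hV.aemeasurable
    have hd : Integrable (fun ω => (1 / 2) * Real.log (2 * Real.pi * 1)
        + (∫ v, A (Q ω, v) ^ 2 ∂(κ (Q ω)) + 1) / (2 * 1)) μ :=
      (integrable_const _).add ((h2.add (integrable_const 1)).div_const _)
    refine hd.mono' ((dH1_kernel_measurable κ hA).comp hQ).aestronglyMeasurable ?_
    filter_upwards [h1] with ω hω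
    rw [Real.norm_of_nonneg (Hn_nonneg _)]
    have hs : Integrable (fun x : ℝ => x ^ 2) ((κ (Q ω)).map (fun v => A (Q ω, v))) := by
      rw [integrable_map_measure (by fun_prop) (by fun_prop)]; exact hω
    have h3 := Hn_le hs 0 1 one_pos
    simp only [sub_zero] at h3
    rw [integral_map (by fun_prop) (by fun_prop)] at h3
    exact h3
  · rw [condDiffEnt, ← integral_div]
    refine integral_congr_ae ?_
    filter_upwards [condDistrib_sm hQ hV hN hA hNlaw hind] with ω hω
    rw [hω, dH1_sm]

/-- **Lemma (bound on `I(U, X₂; Y₂)`).**  Let `|b| ≤ 1`, let `X₁, X₂` be zero-mean with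
`E[X₁²] ≤ P₁`, `E[X₂²] ≤ P₂`, let `Z₁ ~ N(0,1)` and `Z' ~ N(0,1−b²)` be independent of
each other and of `(U, X₁, X₂)`, and set `Y₂ = bX₁ + X₂ + bZ₁ + Z'`.  If
`h(X₁ + Z₁ | U, X₂) = ½ log(2πe(1 + αP₁))` for some `α ∈ [0,1]`, then
`I(U, X₂; Y₂) = h(Y₂) − h(Y₂ | U, X₂)
  ≤ ½ log((1 + b²P₁ + P₂ + 2|b|√((1−α)P₁P₂)) / (1 + b²αP₁))`. -/
theorem mutualInfo_Y2_bound {Ω 𝒰 : Type*} [MeasurableSpace Ω] [MeasurableSpace 𝒰]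
    (μ : Measure Ω) [IsProbabilityMeasure μ]
    (b : ℝ) (hb : |b| ≤ 1)
    (U : Ω → 𝒰) (X1 X2 Z1 Z' : Ω → ℝ)
    (hU : Measurable U) (hX1 : Measurable X1) (hX2 : Measurable X2)
    (hZ1 : Measurable Z1) (hZ' : Measurable Z')
    (P1 P2 : ℝ) (hP1 : 0 < P1) (hP2 : 0 < P2)
    (hX1sq : MemLp X1 2 μ) (hX2sq : MemLp X2 2 μ)
    (hX1mean : (∫ ω, X1 ω ∂μ) = 0) (hX2mean : (∫ ω, X2 ω ∂μ) = 0)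
    (hX1pow : (∫ ω, (X1 ω) ^ 2 ∂μ) ≤ P1) (hX2pow : (∫ ω, (X2 ω) ^ 2 ∂μ) ≤ P2)
    (hZ1law : Measure.map Z1 μ = gaussianReal 0 1)
    (hZ'law : Measure.map Z' μ = gaussianReal 0 (Real.toNNReal (1 - b ^ 2)))
    (hindep1 : IndepFun Z1 Z' μ)
    (hindep2 : IndepFun (fun ω => (Z1 ω, Z' ω)) (fun ω => (U ω, X1 ω, X2 ω)) μ)
    (α : ℝ) (hα0 : 0 ≤ α) (hα1 : α ≤ 1)
    (hent : condDiffEnt μ (fun ω => X1 ω + Z1 ω) (fun ω => (U ω, X2 ω))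
      = (1 / 2) * Real.logb 2 (2 * Real.pi * Real.exp 1 * (1 + α * P1))) :
    dH1 (Measure.map (fun ω => b * X1 ω + X2 ω + b * Z1 ω + Z' ω) μ)
        - condDiffEnt μ (fun ω => b * X1 ω + X2 ω + b * Z1 ω + Z' ω)
            (fun ω => (U ω, X2 ω))
      ≤ (1 / 2) * Real.logb 2
          ((1 + b ^ 2 * P1 + P2 + 2 * |b| * Real.sqrt ((1 - α) * P1 * P2))
            / (1 + b ^ 2 * α * P1)) := by
  have hb2 : b ^ 2 ≤ 1 := by rw [← sq_abs]; nlinarith [abs_nonneg b]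
  have hlog2 : 0 < Real.log 2 := Real.log_pos one_lt_two
  set Q : Ω → 𝒰 × ℝ := fun ω => (U ω, X2 ω) with hQdef
  have hQ : Measurable Q := hU.prodMk hX2
  set κ := condDistrib X1 Q μ with hκ
  set N : Ω → ℝ := fun ω => b * Z1 ω + Z' ω with hNdef
  have hN : Measurable N := by fun_prop
  have hNlaw : μ.map N = gaussianReal 0 1 := by
    have h1 : μ.map (fun ω => b * Z1 ω) = gaussianReal 0 (Real.toNNReal (b ^ 2)) := by
      have : μ.map (fun ω => b * Z1 ω) = (μ.map Z1).map (b * ·) := by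
        rw [Measure.map_map (by fun_prop) hZ1]; rfl
      rw [this, hZ1law, gaussianReal_map_const_mul]
      congr 1
      · simp
      · ext; simp [sq_nonneg]
    have h2 : IndepFun (fun ω => b * Z1 ω) Z' μ :=
      hindep1.comp (φ := fun x => b * x) (ψ := fun x => x) (by fun_prop) (by fun_prop)
    have h3 := gaussianReal_add_gaussianReal_of_indepFun h2 h1 hZ'law
    have h4 : Real.toNNReal (b ^ 2) + Real.toNNReal (1 - b ^ 2) = 1 := by
      rw [← Real.toNNReal_add (sq_nonneg b) (by linarith)]; simp
    rw [h4, add_zero] at h3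
    exact h3
  have hindZ : IndepFun Z1 (fun ω => (Q ω, X1 ω)) μ :=
    hindep2.comp (φ := fun p : ℝ × ℝ => p.1)
      (ψ := fun p : 𝒰 × ℝ × ℝ => ((p.1, p.2.2), p.2.1)) (by fun_prop) (by fun_prop)
  have hindN : IndepFun N (fun ω => (Q ω, X1 ω)) μ :=
    hindep2.comp (φ := fun p : ℝ × ℝ => b * p.1 + p.2)
      (ψ := fun p : 𝒰 × ℝ × ℝ => ((p.1, p.2.2), p.2.1)) (by fun_prop) (by fun_prop)
  have hindV : IndepFun (fun ω => b * X1 ω + X2 ω) N μ :=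
    (hindep2.comp (φ := fun p : ℝ × ℝ => b * p.1 + p.2)
      (ψ := fun p : 𝒰 × ℝ × ℝ => b * p.2.1 + p.2.2) (by fun_prop) (by fun_prop)).symm
  have hV2 : MemLp (fun ω => b * X1 ω + X2 ω) 2 μ := (hX1sq.const_mul b).add hX2sq
  -- conditional entropies
  obtain ⟨hi1, hc1⟩ := cond_ent (A := fun p : (𝒰 × ℝ) × ℝ => p.2) hQ hX1 hZ1 (by fun_prop)
    hZ1law hindZ hX1sq.integrable_sq
  simp only [Measure.map_id'] at hi1 hc1
  obtain ⟨hi2, hc2⟩ := cond_ent (A := fun p : (𝒰 × ℝ) × ℝ => b * p.2 + p.1.2) hQ hX1 hN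
    (by fun_prop) hNlaw hindN hV2.integrable_sq
  have hfun : (fun ω => b * X1 ω + X2 ω + b * Z1 ω + Z' ω)
      = fun ω => (b * X1 ω + X2 ω) + N ω := by funext ω; simp only [hNdef]; ring
  have hlaw : μ.map (fun ω => (b * X1 ω + X2 ω) + N ω) = sm (μ.map (fun ω => b * X1 ω + X2 ω)) :=
    law_add_gauss (by fun_prop) hN hNlaw hindV
  have hVp : IsProbabilityMeasure (μ.map (fun ω => b * X1 ω + X2 ω)) :=
    Measure.isProbabilityMeasure_map (by fun_prop)
  rw [hfun, hlaw, dH1_sm]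
  rw [show condDiffEnt μ (fun ω => (b * X1 ω + X2 ω) + N ω) Q = _ from hc2]
  rw [hc1] at hent
  have hs1 : 0 < 1 + α * P1 := by have := mul_nonneg hα0 hP1.le; linarith
  have hE1 : ∫ ω, Hn (κ (Q ω)) ∂μ = ((1 / 2) * Real.log (2 * Real.pi) + 1 / 2)
      + (1 / 2) * Real.log (1 + α * P1) := by
    have e : Real.log (2 * Real.pi * Real.exp 1 * (1 + α * P1))
        = Real.log (2 * Real.pi) + 1 + Real.log (1 + α * P1) := by
      rw [Real.log_mul (by positivity) hs1.ne', Real.log_mul (by positivity) (by positivity),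
        Real.log_exp]
    rw [Real.logb, e, ← mul_div_assoc, div_left_inj' hlog2.ne'] at hent
    rw [hent]; ring
  set hZ := (1 / 2) * Real.log (2 * Real.pi) + 1 / 2 with hhZ
  set m := (1 / 2) * Real.log (1 + α * P1) with hm
  -- a.e. finite second moments of the conditional law
  have hsq : Integrable (fun p : (𝒰 × ℝ) × ℝ => p.2 ^ 2) (μ.map fun ω => (Q ω, X1 ω)) := by
    rw [integrable_map_measure (by fun_prop) (by fun_prop)]; exact hX1sq.integrable_sq
  have hae : ∀ᵐ ω ∂μ, Integrable (fun x : ℝ => x ^ 2) (κ (Q ω)) :=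
    hsq.condDistrib_ae hQ.aemeasurable hX1.aemeasurable
  -- lower bound for the conditional entropy of `Y₂`
  have hlow : hZ + (1 / 2) * Real.log (1 + b ^ 2 * α * P1)
      ≤ ∫ ω, Hn ((κ (Q ω)).map (fun v => b * v + X2 ω)) ∂μ := by
    have hc : b ^ 2 + Real.sqrt (1 - b ^ 2) ^ 2 = 1 := by
      rw [Real.sq_sqrt (by linarith)]; ring
    have he : Real.exp (2 * m) = 1 + α * P1 := by
      rw [hm, ← mul_assoc]; norm_num; exact Real.exp_log hs1
    have hr : b ^ 2 * Real.exp (2 * m) + Real.sqrt (1 - b ^ 2) ^ 2 = 1 + b ^ 2 * α * P1 := by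
      rw [he, Real.sq_sqrt (by linarith)]; ring
    set l := b ^ 2 * Real.exp (2 * m) / (b ^ 2 * Real.exp (2 * m) + Real.sqrt (1 - b ^ 2) ^ 2)
      with hl
    have hpt : ∀ᵐ ω ∂μ, (hZ + (1 / 2) * Real.log (1 + b ^ 2 * α * P1)) + l * (Hn (κ (Q ω)) - hZ - m)
        ≤ Hn ((κ (Q ω)).map (fun v => b * v + X2 ω)) := by
      filter_upwards [hae] with ω hω
      have h := epi_lin hω (X2 ω) b (Real.sqrt (1 - b ^ 2)) m hc
      rw [← hhZ, ← hl, hr] at h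
      exact h
    have hi3 : Integrable (fun ω => Hn (κ (Q ω)) - hZ) μ := hi1.sub (integrable_const _)
    have hi4 : Integrable (fun ω => Hn (κ (Q ω)) - hZ - m) μ := hi3.sub (integrable_const _)
    have h := integral_mono_ae ((integrable_const _).add (hi4.const_mul l)) hi2 hpt
    refine le_trans (le_of_eq ?_) h
    simp only [Pi.add_apply]
    rw [integral_add (integrable_const _) (hi4.const_mul l), integral_const_mul,
      integral_sub hi3 (integrable_const _), integral_sub hi1 (integrable_const _), hE1]
    simp
  -- estimation bound
  have hest : ∀ β : ℝ, α * P1 ≤ ∫ ω, (X1 ω - β * X2 ω) ^ 2 ∂μ := by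
    intro β
    have hm2 : MemLp (fun ω => X1 ω - β * X2 ω) 2 μ := hX1sq.sub (hX2sq.const_mul β)
    have hf : Integrable (fun p : (𝒰 × ℝ) × ℝ => (p.2 - β * p.1.2) ^ 2)
        (μ.map fun ω => (Q ω, X1 ω)) := by
      rw [integrable_map_measure (by fun_prop) (by fun_prop)]; exact hm2.integrable_sq
    have hfi := hf.integral_condDistrib hQ.aemeasurable hX1.aemeasurable
    have hfe : ∫ ω, ∫ v, (v - β * X2 ω) ^ 2 ∂(κ (Q ω)) ∂μ = ∫ ω, (X1 ω - β * X2 ω) ^ 2 ∂μ := by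
      have e1 : ∫ p : (𝒰 × ℝ) × ℝ, (p.2 - β * p.1.2) ^ 2 ∂(μ.map fun ω => (Q ω, X1 ω))
          = ∫ ω, (X1 ω - β * X2 ω) ^ 2 ∂μ := by
        rw [integral_map (by fun_prop) (by fun_prop)]
      rw [← e1, ← compProd_map_condDistrib hX1.aemeasurable, Measure.integral_compProd
        (by rw [compProd_map_condDistrib hX1.aemeasurable]; exact hf)]
      have hsmeas : StronglyMeasurable (fun q : 𝒰 × ℝ => ∫ v, (v - β * q.2) ^ 2 ∂(κ q)) := by
        have : StronglyMeasurable (fun p : (𝒰 × ℝ) × ℝ => (p.2 - β * p.1.2) ^ 2) := by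
          apply Measurable.stronglyMeasurable; fun_prop
        exact this.integral_kernel_prod_right' (κ := κ)
      rw [integral_map hQ.aemeasurable hsmeas.aestronglyMeasurable]
    have hpt : ∀ᵐ ω ∂μ, Hn (κ (Q ω)) ≤ (1 / 2) * Real.log (2 * Real.pi * (1 + α * P1))
        + (∫ v, (v - β * X2 ω) ^ 2 ∂(κ (Q ω)) + 1) / (2 * (1 + α * P1)) := by
      filter_upwards [hae] with ω hω
      exact Hn_le hω (β * X2 ω) _ hs1
    have hj1 : Integrable (fun ω => ∫ v, (v - β * X2 ω) ^ 2 ∂(κ (Q ω)) + 1) μ :=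
      hfi.add (integrable_const _)
    have h := integral_mono_ae hi1 ((integrable_const _).add (hj1.div_const _)) hpt
    simp only [Pi.add_apply] at h
    rw [integral_add (integrable_const _) (hj1.div_const _), integral_div,
      integral_add hfi (integrable_const _), hE1] at h
    simp only [integral_const, probReal_univ, one_smul] at h
    rw [show ∫ ω, ∫ v, (v - β * (Q ω).2) ^ 2 ∂(κ (Q ω)) ∂μ = _ from hfe,
      Real.log_mul (by positivity) hs1.ne'] at h
    have h5 : 1 / 2 ≤ (∫ ω, (X1 ω - β * X2 ω) ^ 2 ∂μ + 1) / (2 * (1 + α * P1)) := by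
      rw [hhZ, hm] at h; linarith
    rw [le_div_iff₀ (by positivity)] at h5
    linarith
  have hi12 : Integrable (fun ω => X1 ω * X2 ω) μ := hX1sq.integrable_mul hX2sq
  have hi11 : Integrable (fun ω => X1 ω ^ 2) μ := hX1sq.integrable_sq
  have hi22 : Integrable (fun ω => X2 ω ^ 2) μ := hX2sq.integrable_sq
  set R := ∫ ω, X1 ω * X2 ω ∂μ with hR
  have hquad : ∀ s t : ℝ, ∫ ω, (s * X1 ω + t * X2 ω) ^ 2 ∂μ
      = s ^ 2 * ∫ ω, X1 ω ^ 2 ∂μ + (2 * s * t) * R + t ^ 2 * ∫ ω, X2 ω ^ 2 ∂μ := by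
    intro s t
    have e : ∀ ω, (s * X1 ω + t * X2 ω) ^ 2
        = (s ^ 2 * X1 ω ^ 2 + (2 * s * t) * (X1 ω * X2 ω)) + t ^ 2 * X2 ω ^ 2 := by
      intro ω; ring
    simp only [e]
    have k1 : Integrable (fun ω => s ^ 2 * X1 ω ^ 2 + (2 * s * t) * (X1 ω * X2 ω)) μ :=
      (hi11.const_mul _).add (hi12.const_mul _)
    rw [integral_add k1 (hi22.const_mul _), integral_add (hi11.const_mul _) (hi12.const_mul _),
      integral_const_mul, integral_const_mul, integral_const_mul]
  have hR2 : R ^ 2 ≤ (1 - α) * P1 * P2 := by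
    have h := hest (R / P2)
    have e : ∀ ω, X1 ω - R / P2 * X2 ω = 1 * X1 ω + (-(R / P2)) * X2 ω := by intro ω; ring
    simp only [e] at h
    rw [hquad] at h
    have h6 : (-(R / P2)) ^ 2 * ∫ ω, X2 ω ^ 2 ∂μ ≤ (-(R / P2)) ^ 2 * P2 :=
      mul_le_mul_of_nonneg_left hX2pow (sq_nonneg _)
    have h7 : (-(R / P2)) ^ 2 * P2 = R ^ 2 / P2 := by field_simp
    have h8 : 2 * 1 * (-(R / P2)) * R = -2 * (R ^ 2 / P2) := by ring
    have h9 : R ^ 2 / P2 ≤ (1 - α) * P1 := by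
      rw [h8] at h; rw [h7] at h6; linarith
    rwa [div_le_iff₀ hP2] at h9
  have hbR : b * R ≤ |b| * Real.sqrt ((1 - α) * P1 * P2) := by
    calc b * R ≤ |b * R| := le_abs_self _
      _ = |b| * |R| := abs_mul _ _
      _ ≤ _ := mul_le_mul_of_nonneg_left (Real.abs_le_sqrt hR2) (abs_nonneg b)
  set s := 1 + b ^ 2 * P1 + P2 + 2 * |b| * Real.sqrt ((1 - α) * P1 * P2) with hs
  have hspos : 0 < s := by positivity
  have hVsq : ∫ ω, (b * X1 ω + X2 ω) ^ 2 ∂μ + 1 ≤ s := by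
    have h := hquad b 1
    simp only [one_mul, mul_one, one_pow] at h
    rw [h]
    have := mul_le_mul_of_nonneg_left hX1pow (sq_nonneg b)
    rw [hs]; linarith
  have hup : Hn (μ.map (fun ω => b * X1 ω + X2 ω)) ≤ hZ + (1 / 2) * Real.log s := by
    have hIntg : Integrable (fun x : ℝ => x ^ 2) (μ.map (fun ω => b * X1 ω + X2 ω)) := by
      rw [integrable_map_measure (by fun_prop) (by fun_prop)]; exact hV2.integrable_sq
    have h := Hn_le hIntg 0 s hspos
    simp only [sub_zero] at h
    rw [integral_map (by fun_prop) (by fun_prop), Real.log_mul (by positivity) hspos.ne'] at h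
    have h2 : (∫ ω, (b * X1 ω + X2 ω) ^ 2 ∂μ + 1) / (2 * s) ≤ 1 / 2 := by
      rw [div_le_iff₀ (by positivity)]; linarith
    rw [hhZ]; linarith
  have hden : 0 < 1 + b ^ 2 * α * P1 := by positivity
  rw [← sub_div, Real.logb, ← mul_div_assoc, div_le_div_iff_of_pos_right hlog2,
    Real.log_div hspos.ne' hden.ne']
  linarith [show hZ + (1 / 2) * Real.log (1 + b ^ 2 * α * P1)
    ≤ ∫ ω, Hn ((condDistrib X1 Q μ (Q ω)).map (fun v => b * v + (Q ω).2)) ∂μ from hlow]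
end
end
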